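/- arXiv:2304.13332 — 3 statements merged into one kernel-verified Lean document; each statement's English description precedes it below -/
import Mathlib

section
/- Let X be a real Hilbert space and K a compact subset of X. For any elements v_1, …, v_n ∈ K, letting P_0 = 0 and P_k denote the orthogonal projection onto span{v_1,…,v_k}, one has (∏_{k=1}^n ‖v_k − P_{k−1} v_k‖)^{1/n} ≤ (n! V_n)^{1/n} · ε_n(co(K)). -/
open scoped RealInnerProductSpace

/-- Dyadic entropy number: infimum of all `ε > 0` such that `K` is covered by `2^n`
balls of radius `ε`. -/
noncomputable def entropyNumber {X : Type*} [NormedAddCommGroup X] (n : ℕ) (K : Set X) : ℝ :=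
  sInf {ε : ℝ | 0 < ε ∧ ∃ c : Fin (2 ^ n) → X, K ⊆ ⋃ i, Metric.closedBall (c i) ε}

/-- Symmetric (absolutely) convex hull: closure of the set of finite sums `∑ cᵢ gᵢ`
with `gᵢ ∈ K` and `∑ |cᵢ| ≤ 1`. -/
noncomputable def symConvexHull {X : Type*} [NormedAddCommGroup X] [NormedSpace ℝ X]
    (K : Set X) : Set X :=
  closure {x : X | ∃ (m : ℕ) (c : Fin m → ℝ) (g : Fin m → X),
    (∀ i, g i ∈ K) ∧ (∑ i, |c i|) ≤ 1 ∧ x = ∑ i, c i • g i}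

/-- Volume of the unit Euclidean ball in `ℝⁿ`. -/
noncomputable def unitBallVol (n : ℕ) : ℝ :=
  Real.pi ^ ((n : ℝ) / 2) / Real.Gamma ((n : ℝ) / 2 + 1)

/-- Span of the first `n` terms of a sequence. -/
noncomputable def spanFirst {X : Type*} [NormedAddCommGroup X] [NormedSpace ℝ X]
    (f : ℕ → X) (n : ℕ) : Submodule ℝ X :=
  Submodule.span ℝ (f '' {i | i < n})

/-- The weak greedy algorithm with parameter `γ`: `f n` (the `(n+1)`-st iterate) lies in `K`
and its distance to the span of the previous iterates is at least `γ` times that of any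
other element of `K`. -/
def IsWeakGreedy {X : Type*} [NormedAddCommGroup X] [NormedSpace ℝ X]
    (γ : ℝ) (K : Set X) (f : ℕ → X) : Prop :=
  ∀ n : ℕ, f n ∈ K ∧ ∀ g ∈ K,
    γ * Metric.infDist g (spanFirst f n : Set X) ≤ Metric.infDist (f n) (spanFirst f n : Set X)

/-- The greedy error `σ_n(K) = sup_{f ∈ K} dist(f, span{f_1,…,f_n})`. -/
noncomputable def greedyError {X : Type*} [NormedAddCommGroup X] [NormedSpace ℝ X]
    (K : Set X) (f : ℕ → X) (n : ℕ) : ℝ :=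
  sSup ((fun g => Metric.infDist g (spanFirst f n : Set X)) '' K)

/-- Kolmogorov `n`-width. -/
noncomputable def kolmogorovWidth {X : Type*} [NormedAddCommGroup X] [NormedSpace ℝ X]
    (n : ℕ) (K : Set X) : ℝ :=
  sInf {d : ℝ | ∃ Y : Submodule ℝ X, FiniteDimensional ℝ Y ∧ Module.finrank ℝ Y ≤ n ∧
    d = sSup ((fun g => Metric.infDist g (Y : Set X)) '' K)}

/-- `f` admits an `ℓ¹` representation over the dictionary `D`. -/
def HasL1Rep {X : Type*} [NormedAddCommGroup X] [NormedSpace ℝ X] (D : Set X) (f : X) : Prop :=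
  ∃ (c : ℕ → ℝ) (g : ℕ → X), (∀ i, g i ∈ D) ∧ Summable (fun i => |c i|) ∧
    HasSum (fun i => c i • g i) f

/-- The variation norm `‖f‖_{L₁(D)}`. -/
noncomputable def varNorm {X : Type*} [NormedAddCommGroup X] [NormedSpace ℝ X]
    (D : Set X) (f : X) : ℝ :=
  sInf {t : ℝ | ∃ (c : ℕ → ℝ) (g : ℕ → X), (∀ i, g i ∈ D) ∧ Summable (fun i => |c i|) ∧
    HasSum (fun i => c i • g i) f ∧ t = ∑' i, |c i|}

/-- The orthogonal greedy algorithm with target `f`: `fa 0 = 0`; at each step `g n ∈ D`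
maximizes `|⟨g, f - fa n⟩|` over `D`, and `fa (n+1)` is the orthogonal projection of `f`
onto `span{g 0, …, g n}`. -/
def IsOGA {X : Type*} [NormedAddCommGroup X] [InnerProductSpace ℝ X]
    (D : Set X) (f : X) (g fa : ℕ → X) : Prop :=
  fa 0 = 0 ∧ ∀ n : ℕ,
    g n ∈ D ∧ (∀ h ∈ D, |⟪h, f - fa n⟫| ≤ |⟪g n, f - fa n⟫|) ∧
    fa (n + 1) ∈ Submodule.span ℝ (g '' {i | i ≤ n}) ∧
    ∀ w ∈ Submodule.span ℝ (g '' {i | i ≤ n}), ⟪f - fa (n + 1), w⟫ = 0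

/-- Best `n`-term approximation error `E_n(f, D)`. -/
noncomputable def bestNTermError {X : Type*} [NormedAddCommGroup X] [NormedSpace ℝ X]
    (D : Set X) (n : ℕ) (f : X) : ℝ :=
  sInf {r : ℝ | ∃ (c : Fin n → ℝ) (g : Fin n → X), (∀ i, g i ∈ D) ∧ r = ‖f - ∑ i, c i • g i‖}

/-- The K-functional `K(t, g)` between `X` and `L₁(D)`. -/
noncomputable def Kfunctional {X : Type*} [NormedAddCommGroup X] [NormedSpace ℝ X]
    (D : Set X) (t : ℝ) (gg : X) : ℝ :=
  sInf {s : ℝ | ∃ h : X, HasL1Rep D h ∧ s = ‖gg - h‖ + t * varNorm D h}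

/-- The interpolation norm `‖g‖_θ = sup_{t > 0} t^{-θ} K(t, g)`. -/
noncomputable def interpNorm {X : Type*} [NormedAddCommGroup X] [NormedSpace ℝ X]
    (D : Set X) (θ : ℝ) (gg : X) : ℝ :=
  sSup ((fun t => t ^ (-θ) * Kfunctional D t gg) '' Set.Ioi (0 : ℝ))

open MeasureTheory InnerProductSpace

lemma unitBallVol_nonneg (n : ℕ) : 0 ≤ unitBallVol n :=
  div_nonneg (Real.rpow_nonneg Real.pi_nonneg _) (Real.Gamma_nonneg_of_nonneg (by positivity))

/-- Absolutely convex combinations of a finite family of elements of `K` lie in its symmetric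
convex hull. -/
lemma sum_smul_mem_symConvexHull {X : Type*} [NormedAddCommGroup X] [NormedSpace ℝ X]
    {K : Set X} {n : ℕ} {v : Fin n → X} (hv : ∀ k, v k ∈ K) {c : Fin n → ℝ}
    (hc : ∑ i, |c i| ≤ 1) : ∑ i, c i • v i ∈ symConvexHull K :=
  subset_closure ⟨n, c, v, hv, hc, rfl⟩

lemma symConvexHull_subset_closedBall {X : Type*} [NormedAddCommGroup X] [NormedSpace ℝ X]
    {K : Set X} {R : ℝ} (hR : 0 ≤ R) (hK : ∀ x ∈ K, ‖x‖ ≤ R) :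
    symConvexHull K ⊆ Metric.closedBall 0 R := by
  refine closure_minimal ?_ Metric.isClosed_closedBall
  rintro _ ⟨m, c, g, hg, hc, rfl⟩
  rw [mem_closedBall_zero_iff]
  calc ‖∑ i, c i • g i‖ ≤ ∑ i, |c i| * R := by
        refine norm_sum_le_of_le _ fun i _ => ?_
        rw [norm_smul, Real.norm_eq_abs]
        exact mul_le_mul_of_nonneg_left (hK _ (hg i)) (abs_nonneg _)
    _ = (∑ i, |c i|) * R := (Finset.sum_mul ..).symm
    _ ≤ R := mul_le_of_le_one_left hR hc

/-- The set of admissible covering radii defining the entropy numbers of the symmetric convex hull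
of a bounded set is nonempty. -/
lemma exists_covering_symConvexHull {X : Type*} [NormedAddCommGroup X] [NormedSpace ℝ X]
    {K : Set X} (hK : Bornology.IsBounded K) (n : ℕ) :
    {ε : ℝ | 0 < ε ∧ ∃ c : Fin (2 ^ n) → X,
      symConvexHull K ⊆ ⋃ i, Metric.closedBall (c i) ε}.Nonempty := by
  obtain ⟨R, hR, hKR⟩ := hK.exists_pos_norm_le
  refine ⟨R, hR, fun _ => 0, (symConvexHull_subset_closedBall hR.le hKR).trans ?_⟩
  exact Set.subset_iUnion (fun _ : Fin (2 ^ n) => Metric.closedBall (0 : X) R)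
    ⟨0, by positivity⟩

/-- Volume of the cross-polytope in Euclidean space. -/
lemma volume_sum_abs_le_one {n : ℕ} (hn : 1 ≤ n) :
    volume {x : EuclideanSpace ℝ (Fin n) | ∑ i, |x i| ≤ 1} =
      ENNReal.ofReal (2 ^ n / n.factorial) := by
  have : Nonempty (Fin n) := ⟨⟨0, hn⟩⟩
  have hmeas : MeasurableSet {x : Fin n → ℝ | ∑ i, |x i| ≤ 1} :=
    measurableSet_le (by fun_prop) measurable_const
  have h := volume_sum_rpow_le (Fin n) (p := 1) le_rfl 1
  simp only [Real.rpow_one, div_one, ENNReal.ofReal_one, one_pow, one_mul, Fintype.card_fin,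
    Real.Gamma_nat_eq_factorial] at h
  rw [show (1 : ℝ) + 1 = 2 by norm_num, Real.Gamma_two, mul_one] at h
  rw [← h]
  exact (PiLp.volume_preserving_ofLp (Fin n)).measure_preimage hmeas.nullMeasurableSet

lemma volume_closedBall_eq_unitBallVol {n : ℕ} (hn : 1 ≤ n) (x : EuclideanSpace ℝ (Fin n))
    {r : ℝ} (hr : 0 ≤ r) :
    volume (Metric.closedBall x r) = ENNReal.ofReal (r ^ n * unitBallVol n) := by
  have : Nonempty (Fin n) := ⟨⟨0, hn⟩⟩
  rw [EuclideanSpace.volume_closedBall, Fintype.card_fin, ← ENNReal.ofReal_pow hr,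
    ← ENNReal.ofReal_mul (by positivity), unitBallVol, Real.sqrt_eq_rpow,
    ← Real.rpow_mul_natCast Real.pi_nonneg, one_div_mul_eq_div]

/-- A volume comparison: if the image of the cross-polytope under a matrix is covered by `2 ^ n`
balls of radius `ε`, then the determinant is controlled by `ε ^ n`. -/
lemma abs_det_le_of_crossPolytope_covering {n : ℕ} (hn : 1 ≤ n) (A : Matrix (Fin n) (Fin n) ℝ)
    {ε : ℝ} (hε : 0 ≤ ε) (c : Fin (2 ^ n) → EuclideanSpace ℝ (Fin n))
    (hcov : A.toLpLin 2 2 '' {x | ∑ i, |x i| ≤ 1} ⊆ ⋃ i, Metric.closedBall (c i) ε) :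
    |A.det| ≤ n.factorial * unitBallVol n * ε ^ n := by
  have hV := unitBallVol_nonneg n
  have h := (measure_mono (μ := volume) hcov).trans (measure_iUnion_le _)
  rw [Measure.addHaar_image_linearMap, volume_sum_abs_le_one hn, Matrix.toLpLin_eq_toLin,
    LinearMap.det_toLin, ← ENNReal.ofReal_mul (abs_nonneg _)] at h
  simp only [volume_closedBall_eq_unitBallVol hn _ hε, tsum_fintype, Finset.sum_const,
    Finset.card_univ, Fintype.card_fin] at h
  rw [← ENNReal.ofReal_nsmul, ENNReal.ofReal_le_ofReal_iff (by positivity), nsmul_eq_mul,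
    mul_div_assoc', div_le_iff₀ (by positivity)] at h
  push_cast at h
  refine le_of_mul_le_mul_right (h.trans_eq ?_) (show (0 : ℝ) < 2 ^ n by positivity)
  ring

/-- The inner products with the members of a finite family, as a linear map. -/
noncomputable def innerCoords {X : Type*} [NormedAddCommGroup X] [InnerProductSpace ℝ X] {n : ℕ}
    (e : Fin n → X) : X →ₗ[ℝ] EuclideanSpace ℝ (Fin n) :=
  (WithLp.linearEquiv 2 ℝ (Fin n → ℝ)).symm.toLinearMap ∘ₗ
    LinearMap.pi fun k => innerₛₗ ℝ (e k)

lemma innerCoords_apply {X : Type*} [NormedAddCommGroup X] [InnerProductSpace ℝ X] {n : ℕ}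
    (e : Fin n → X) (x : X) (k : Fin n) : innerCoords e x k = ⟪e k, x⟫ := rfl

/-- Bessel's inequality for the coordinate map. -/
lemma norm_innerCoords_le {X : Type*} [NormedAddCommGroup X] [InnerProductSpace ℝ X] {n : ℕ}
    {e : Fin n → X} (he : Orthonormal ℝ e) (x : X) : ‖innerCoords e x‖ ≤ ‖x‖ := by
  refine (sq_le_sq₀ (norm_nonneg _) (norm_nonneg _)).1 ?_
  rw [EuclideanSpace.norm_sq_eq]
  exact he.sum_inner_products_le x

lemma abs_det_inner_le_of_covering {X : Type*} [NormedAddCommGroup X] [InnerProductSpace ℝ X]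
    {K : Set X} {n : ℕ} (hn : 1 ≤ n) {v e : Fin n → X} (hv : ∀ k, v k ∈ K)
    (he : Orthonormal ℝ e) {ε : ℝ} (hε : 0 ≤ ε) (c : Fin (2 ^ n) → X)
    (hcov : symConvexHull K ⊆ ⋃ i, Metric.closedBall (c i) ε) :
    |(Matrix.of fun k j => ⟪e k, v j⟫).det| ≤ n.factorial * unitBallVol n * ε ^ n := by
  refine abs_det_le_of_crossPolytope_covering hn _ hε (fun i => innerCoords e (c i)) ?_
  rintro _ ⟨x, hx, rfl⟩
  obtain ⟨i, hi⟩ := Set.mem_iUnion.1 (hcov (sum_smul_mem_symConvexHull hv hx))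
  have hmap : (Matrix.of fun k j => ⟪e k, v j⟫).toLpLin 2 2 x =
      innerCoords e (∑ j, x j • v j) := by
    ext k
    simp [innerCoords_apply, Matrix.toLpLin_apply, Matrix.mulVec, dotProduct, mul_comm]
  refine Set.mem_iUnion.2 ⟨i, ?_⟩
  rw [Metric.mem_closedBall, dist_eq_norm] at hi ⊢
  rw [hmap, ← map_sub]
  exact (norm_innerCoords_le he _).trans hi

/-- The distance to the span of the preceding vectors is at most the norm of the corresponding
Gram–Schmidt vector. -/
lemma infDist_span_le_norm_gramSchmidt {X : Type*} [NormedAddCommGroup X]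
    [InnerProductSpace ℝ X] {n : ℕ} (v : Fin n → X) (k : Fin n) :
    Metric.infDist (v k) (Submodule.span ℝ (v '' {j | j < k}) : Set X) ≤
      ‖gramSchmidt ℝ v k‖ := by
  have hmem : v k - gramSchmidt ℝ v k ∈ Submodule.span ℝ (v '' Set.Iio k) := by
    rw [← span_gramSchmidt_Iio ℝ v k]
    nth_rw 1 [gramSchmidt_def'' ℝ v k]
    rw [add_sub_cancel_left]
    exact Submodule.sum_mem _ fun i hi => Submodule.smul_mem _ _ <|
      Submodule.subset_span <| Set.mem_image_of_mem _ (Finset.mem_Iio.1 hi)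
  refine (Metric.infDist_le_dist_of_mem hmem).trans_eq ?_
  rw [dist_eq_norm, sub_sub_cancel]

lemma inner_gramSchmidt_self {X : Type*} [NormedAddCommGroup X]
    [InnerProductSpace ℝ X] {n : ℕ} (v : Fin n → X) (k : Fin n) :
    ⟪gramSchmidt ℝ v k, v k⟫ = ‖gramSchmidt ℝ v k‖ ^ 2 := by
  conv_lhs => arg 3; rw [gramSchmidt_def'' ℝ v k]
  rw [inner_add_right, inner_sum, Finset.sum_eq_zero, add_zero, real_inner_self_eq_norm_sq]
  intro i hi
  rw [inner_smul_right, gramSchmidt_orthogonal ℝ v (Finset.mem_Iio.1 hi).ne', mul_zero]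

lemma orthonormal_gramSchmidtNormed_of_ne_zero {X : Type*} [NormedAddCommGroup X]
    [InnerProductSpace ℝ X] {n : ℕ} {v : Fin n → X} (h : ∀ k, gramSchmidt ℝ v k ≠ 0) :
    Orthonormal ℝ (gramSchmidtNormed ℝ v) := by
  refine ⟨fun k => gramSchmidtNormed_unit_length' ?_, fun i j hij => ?_⟩
  · simpa [gramSchmidtNormed] using h k
  · simp [gramSchmidtNormed, inner_smul_left, inner_smul_right, gramSchmidt_orthogonal ℝ v hij]

lemma det_inner_gramSchmidtNormed {X : Type*} [NormedAddCommGroup X]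
    [InnerProductSpace ℝ X] {n : ℕ} (v : Fin n → X) :
    (Matrix.of fun k j => ⟪gramSchmidtNormed ℝ v k, v j⟫).det = ∏ k, ‖gramSchmidt ℝ v k‖ := by
  rw [Matrix.det_of_isUpperTriangular]
  · refine Finset.prod_congr rfl fun k _ => ?_
    rw [Matrix.of_apply, gramSchmidtNormed, inner_smul_left, inner_gramSchmidt_self]
    by_cases h : ‖gramSchmidt ℝ v k‖ = 0
    · simp [h]
    · simp only [RCLike.ofReal_real_eq_id, id_eq, map_inv₀, conj_trivial]
      field_simp
  · intro k j hjk
    have h : ⟪gramSchmidt ℝ v k, v j⟫ = 0 := gramSchmidt_inv_triangular ℝ v hjk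
    simp [gramSchmidtNormed, inner_smul_left, h]

lemma prod_infDist_le_of_covering {X : Type*} [NormedAddCommGroup X] [InnerProductSpace ℝ X]
    {K : Set X} {n : ℕ} (hn : 1 ≤ n) {v : Fin n → X} (hv : ∀ k, v k ∈ K) {ε : ℝ} (hε : 0 ≤ ε)
    (c : Fin (2 ^ n) → X) (hcov : symConvexHull K ⊆ ⋃ i, Metric.closedBall (c i) ε) :
    ∏ k, Metric.infDist (v k) (Submodule.span ℝ (v '' {j | j < k}) : Set X) ≤
      n.factorial * unitBallVol n * ε ^ n := by
  refine (Finset.prod_le_prod (fun _ _ => Metric.infDist_nonneg)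
    fun k _ => infDist_span_le_norm_gramSchmidt v k).trans ?_
  by_cases h : ∀ k, gramSchmidt ℝ v k ≠ 0
  · rw [← det_inner_gramSchmidtNormed]
    exact (le_abs_self _).trans (abs_det_inner_le_of_covering hn hv
      (orthonormal_gramSchmidtNormed_of_ne_zero h) hε c hcov)
  · push Not at h
    obtain ⟨k, hk⟩ := h
    rw [Finset.prod_eq_zero (Finset.mem_univ k) (by simp [hk])]
    have := unitBallVol_nonneg n
    positivity

/-- entropy-based bound for the geometric mean of projection errors
(Lemma 2.1 of the paper). -/
theorem geometric_mean_projection_error_le_entropy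
    {X : Type*} [NormedAddCommGroup X] [InnerProductSpace ℝ X] [CompleteSpace X]
    (K : Set X) (hK : IsCompact K) (n : ℕ) (hn : 1 ≤ n)
    (v : Fin n → X) (hv : ∀ k, v k ∈ K) :
    (∏ k : Fin n, Metric.infDist (v k) ((Submodule.span ℝ (v '' {j | j < k}) : Submodule ℝ X) : Set X))
        ^ ((n : ℝ)⁻¹)
      ≤ ((n.factorial : ℝ) * unitBallVol n) ^ ((n : ℝ)⁻¹) *
          entropyNumber n (symConvexHull K) := by
  have hn0 : n ≠ 0 := Nat.one_le_iff_ne_zero.1 hn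
  have hA : 0 ≤ (n.factorial : ℝ) * unitBallVol n :=
    mul_nonneg (Nat.cast_nonneg _) (unitBallVol_nonneg n)
  have hne := exists_covering_symConvexHull hK.isBounded n
  rw [entropyNumber, ← smul_eq_mul, ← Real.sInf_smul_of_nonneg (Real.rpow_nonneg hA _)]
  refine le_csInf hne.smul_set ?_
  rintro _ ⟨ε, ⟨hε, c, hcov⟩, rfl⟩
  refine (Real.rpow_le_rpow (Finset.prod_nonneg fun _ _ => Metric.infDist_nonneg)
    (prod_infDist_le_of_covering hn hv hε.le c hcov) (by positivity)).trans_eq ?_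
  rw [Real.mul_rpow hA (by positivity), Real.pow_rpow_inv_natCast hε.le hn0]
  rfl
end

section
/- Let X be a real Hilbert space, K a compact subset of X, and γ ∈ (0,1]. For any sequence (f_n) produced by the weak greedy algorithm with parameter γ, the error satisfies σ_n(K) ≤ γ^{−1} (n! V_n)^{1/n} ε_n(co(K)) for every n ≥ 1. -/
open scoped RealInnerProductSpace

open MeasureTheory

/-- The `ℓ¹` unit ball of `ℝⁿ` has volume `2ⁿ / n!`. -/
theorem volume_l1Ball (n : ℕ) :
    volume {x : Fin n → ℝ | ∑ i, |x i| ≤ 1} =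
      ENNReal.ofReal (2 ^ n / (n.factorial : ℝ)) := by
  rcases Nat.eq_zero_or_pos n with rfl | hn
  · simp [volume_pi]
  have : Nonempty (Fin n) := ⟨⟨0, hn⟩⟩
  have h := volume_sum_rpow_le (ι := Fin n) (p := 1) le_rfl 1
  have hG : Real.Gamma (1 + 1) = 1 := by
    have := Real.Gamma_nat_eq_factorial 1
    simpa using this
  simpa [hG, Real.Gamma_nat_eq_factorial] using h

/-- A Euclidean ball of radius `r` in `ℝⁿ` has volume `rⁿ Vₙ`. -/
theorem volume_toLp_preimage_closedBall {n : ℕ} (hn : 1 ≤ n) (c : EuclideanSpace ℝ (Fin n))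
    {r : ℝ} (hr : 0 ≤ r) :
    volume (WithLp.toLp 2 ⁻¹' Metric.closedBall c r : Set (Fin n → ℝ)) =
      ENNReal.ofReal (r ^ n * unitBallVol n) := by
  have : Nonempty (Fin n) := ⟨⟨0, hn⟩⟩
  rw [(PiLp.volume_preserving_toLp (Fin n)).measure_preimage
    Metric.isClosed_closedBall.measurableSet.nullMeasurableSet,
    EuclideanSpace.volume_closedBall, Fintype.card_fin, ← ENNReal.ofReal_pow hr,
    ← ENNReal.ofReal_mul (pow_nonneg hr n), unitBallVol, Real.sqrt_eq_rpow,
    ← Real.rpow_mul_natCast Real.pi_pos.le]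
  congr 4
  ring

theorem unitBallVol_pos (n : ℕ) : 0 < unitBallVol n :=
  div_pos (Real.rpow_pos_of_pos Real.pi_pos _) (Real.Gamma_pos_of_pos (by positivity))

/-- If the vectors `v j` have coordinates, with respect to an orthonormal family `e`, forming a
triangular matrix with diagonal entries at least `s`, and the absolutely convex hull of the `v j`
is covered by `2ⁿ` balls of radius `ε`, then `sⁿ ≤ n! Vₙ εⁿ`. -/
theorem pow_le_of_triangular_of_cover {X : Type*} [NormedAddCommGroup X] [InnerProductSpace ℝ X]
    {n : ℕ} (hn : 1 ≤ n) {e v : Fin n → X} (he : Orthonormal ℝ e)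
    (htri : ∀ i j, j < i → ⟪e i, v j⟫ = 0) {s : ℝ} (hs : 0 ≤ s) (hdiag : ∀ i, s ≤ ⟪e i, v i⟫)
    {ε : ℝ} (hε : 0 ≤ ε) (c : Fin (2 ^ n) → X)
    (hcover : ∀ x : Fin n → ℝ, ∑ i, |x i| ≤ 1 →
      ∃ k, ∑ j, x j • v j ∈ Metric.closedBall (c k) ε) :
    s ^ n ≤ (n.factorial : ℝ) * unitBallVol n * ε ^ n := by
  let A : Matrix (Fin n) (Fin n) ℝ := Matrix.of fun i j => ⟪e i, v j⟫
  let T : X → EuclideanSpace ℝ (Fin n) := fun x => WithLp.toLp 2 fun i => ⟪e i, x⟫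
  have hT : ∀ x y, dist (T x) (T y) ≤ dist x y := by
    intro x y
    rw [EuclideanSpace.dist_eq, dist_eq_norm x y]
    refine Real.sqrt_le_iff.2 ⟨norm_nonneg _, ?_⟩
    have hB := he.sum_inner_products_le (x - y) (s := Finset.univ)
    simpa [T, Real.dist_eq, inner_sub_right] using hB
  have hdet : s ^ n ≤ A.det := by
    rw [Matrix.det_of_isUpperTriangular (M := A) (fun i j hij => htri i j hij)]
    calc s ^ n = ∏ _i : Fin n, s := by simp
      _ ≤ ∏ i, A i i := Finset.prod_le_prod (fun _ _ => hs) fun i _ => hdiag i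
  have hsub : Set.image (Matrix.toLin' A) {x : Fin n → ℝ | ∑ i, |x i| ≤ 1} ⊆
      ⋃ k, (WithLp.toLp 2 ⁻¹' Metric.closedBall (T (c k)) ε : Set (Fin n → ℝ)) := by
    rintro _ ⟨x, hx, rfl⟩
    obtain ⟨k, hk⟩ := hcover x hx
    refine Set.mem_iUnion.2 ⟨k, ?_⟩
    have hTx : WithLp.toLp 2 (Matrix.toLin' A x) = T (∑ j, x j • v j) := by
      ext i
      simp [T, A, Matrix.mulVec, dotProduct, inner_sum, inner_smul_right, mul_comm]
    rw [Set.mem_preimage, hTx]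
    exact (hT _ _).trans hk
  have hV := (unitBallVol_pos n).le
  have hvol := (measure_mono hsub).trans (measure_iUnion_le (μ := volume) _)
  rw [Measure.addHaar_image_linearMap, volume_l1Ball, LinearMap.det_toLin',
    abs_of_nonneg ((pow_nonneg hs n).trans hdet)] at hvol
  simp only [volume_toLp_preimage_closedBall hn _ hε] at hvol
  rw [tsum_fintype, Finset.sum_const, Finset.card_univ, Fintype.card_fin,
    ← ENNReal.ofReal_nsmul, ← ENNReal.ofReal_mul ((pow_nonneg hs n).trans hdet),
    ENNReal.ofReal_le_ofReal_iff (by positivity), nsmul_eq_mul] at hvol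
  push_cast at hvol
  have hfac : (0 : ℝ) < n.factorial := by positivity
  rw [mul_div_assoc', div_le_iff₀ hfac] at hvol
  have h2 : (0 : ℝ) < 2 ^ n := by positivity
  refine hdet.trans (le_of_mul_le_mul_right (hvol.trans_eq ?_) h2)
  ring

instance spanFirst_finiteDimensional {X : Type*} [NormedAddCommGroup X] [NormedSpace ℝ X]
    (f : ℕ → X) (n : ℕ) : FiniteDimensional ℝ (spanFirst f n) :=
  FiniteDimensional.span_of_finite ℝ ((Set.finite_lt_nat n).image f)

theorem spanFirst_mono {X : Type*} [NormedAddCommGroup X] [NormedSpace ℝ X]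
    (f : ℕ → X) : Monotone (spanFirst f) := fun _ _ h =>
  Submodule.span_mono (Set.image_mono fun _ hi => lt_of_lt_of_le hi h)

theorem mem_spanFirst {X : Type*} [NormedAddCommGroup X] [NormedSpace ℝ X]
    (f : ℕ → X) {i n : ℕ} (h : i < n) : f i ∈ spanFirst f n :=
  Submodule.subset_span ⟨i, h, rfl⟩

/-- The normalized component of `f i` orthogonal to the preceding terms. -/
noncomputable def orthoResidual {X : Type*} [NormedAddCommGroup X] [InnerProductSpace ℝ X]
    (f : ℕ → X) (i : ℕ) : X :=
  ‖f i - (spanFirst f i).starProjection (f i)‖⁻¹ •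
    (f i - (spanFirst f i).starProjection (f i))

section orthoResidual

variable {X : Type*} [NormedAddCommGroup X] [InnerProductSpace ℝ X] (f : ℕ → X)

theorem inner_orthoResidual_of_mem {i : ℕ} {w : X} (hw : w ∈ spanFirst f i) :
    ⟪orthoResidual f i, w⟫ = 0 := by
  rw [orthoResidual, real_inner_smul_left, Submodule.starProjection_inner_eq_zero _ _ hw,
    mul_zero]

theorem orthoResidual_mem {i n : ℕ} (h : i < n) : orthoResidual f i ∈ spanFirst f n :=
  Submodule.smul_mem _ _ (Submodule.sub_mem _ (mem_spanFirst f h)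
    (spanFirst_mono f h.le (Submodule.starProjection_apply_mem _ _)))

theorem inner_orthoResidual_self (i : ℕ) :
    ⟪orthoResidual f i, f i⟫ = ‖f i - (spanFirst f i).starProjection (f i)‖ := by
  have h0 := inner_orthoResidual_of_mem f
    (Submodule.starProjection_apply_mem (spanFirst f i) (f i))
  have h1 : ⟪orthoResidual f i, f i⟫ =
      ⟪orthoResidual f i, f i - (spanFirst f i).starProjection (f i)⟫ := by
    rw [inner_sub_right, h0, sub_zero]
  rw [h1, orthoResidual, real_inner_smul_left, real_inner_self_eq_norm_sq]
  rcases eq_or_ne ‖f i - (spanFirst f i).starProjection (f i)‖ 0 with h | h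
  · simp [h]
  · field_simp

theorem infDist_le_inner_orthoResidual (i : ℕ) :
    Metric.infDist (f i) (spanFirst f i : Set X) ≤ ⟪orthoResidual f i, f i⟫ := by
  rw [inner_orthoResidual_self, ← dist_eq_norm]
  exact Metric.infDist_le_dist_of_mem (Submodule.starProjection_apply_mem _ _)

theorem orthonormal_orthoResidual {n : ℕ}
    (h : ∀ i : Fin n, 0 < Metric.infDist (f i) (spanFirst f i : Set X)) :
    Orthonormal ℝ fun i : Fin n => orthoResidual f i := by
  refine ⟨fun i => ?_, fun i j hij => ?_⟩
  · have hpos := (h i).trans_le (infDist_le_inner_orthoResidual f i)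
    rw [inner_orthoResidual_self] at hpos
    show ‖orthoResidual f i‖ = 1
    rw [orthoResidual, norm_smul, norm_inv, norm_norm, inv_mul_cancel₀ hpos.ne']
  · rcases lt_or_gt_of_ne hij with hlt | hlt
    · rw [real_inner_comm]
      exact inner_orthoResidual_of_mem f (orthoResidual_mem f hlt)
    · exact inner_orthoResidual_of_mem f (orthoResidual_mem f hlt)

end orthoResidual

/-- The symmetric convex hull of a bounded set is bounded. -/
theorem isBounded_symConvexHull {X : Type*} [NormedAddCommGroup X] [NormedSpace ℝ X]
    {K : Set X} (hK : Bornology.IsBounded K) : Bornology.IsBounded (symConvexHull K) := by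
  obtain ⟨R, hR0, hR⟩ := hK.exists_pos_norm_le
  refine Bornology.IsBounded.closure (isBounded_iff_forall_norm_le.2 ⟨R, ?_⟩)
  rintro _ ⟨m, c, g, hg, hc, rfl⟩
  calc ‖∑ i, c i • g i‖ ≤ ∑ i, |c i| * R := norm_sum_le_of_le _ fun i _ => by
        rw [norm_smul, Real.norm_eq_abs]
        exact mul_le_mul_of_nonneg_left (hR _ (hg i)) (abs_nonneg _)
    _ = (∑ i, |c i|) * R := (Finset.sum_mul _ _ _).symm
    _ ≤ R := mul_le_of_le_one_left hR0.le hc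

theorem le_entropyNumber {X : Type*} [NormedAddCommGroup X] {n : ℕ} {K : Set X}
    (hK : Bornology.IsBounded K) {a : ℝ}
    (h : ∀ ε : ℝ, 0 < ε → ∀ c : Fin (2 ^ n) → X,
      K ⊆ ⋃ i, Metric.closedBall (c i) ε → a ≤ ε) :
    a ≤ entropyNumber n K := by
  obtain ⟨R, hR0, hR⟩ := hK.exists_pos_norm_le
  refine le_csInf ⟨R, hR0, fun _ => 0, fun x hx => ?_⟩ ?_
  · exact Set.mem_iUnion.2 ⟨⟨0, by positivity⟩, by simpa using hR x hx⟩
  · rintro ε ⟨hε, c, hc⟩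
    exact h ε hε c hc

/-- direct entropy-based bound for the weak greedy algorithm in a
Hilbert space (Theorem 2.1 of the paper). -/
theorem weakGreedy_error_le_entropy_hilbert
    {X : Type*} [NormedAddCommGroup X] [InnerProductSpace ℝ X] [CompleteSpace X]
    (K : Set X) (hK : IsCompact K) (γ : ℝ) (hγ : γ ∈ Set.Ioc (0 : ℝ) 1)
    (f : ℕ → X) (hf : IsWeakGreedy γ K f) (n : ℕ) (hn : 1 ≤ n) :
    greedyError K f n
      ≤ γ⁻¹ * ((n.factorial : ℝ) * unitBallVol n) ^ ((n : ℝ)⁻¹) *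
          entropyNumber n (symConvexHull K) := by
  obtain ⟨hγ0, -⟩ := hγ
  have hbdd := isBounded_symConvexHull hK.isBounded
  have hn0 : n ≠ 0 := by omega
  set B : ℝ := (n.factorial : ℝ) * unitBallVol n
  have hBpos : 0 < B := mul_pos (by positivity) (unitBallVol_pos n)
  have hC : 0 < B ^ ((n : ℝ)⁻¹) := Real.rpow_pos_of_pos hBpos _
  refine csSup_le (Set.Nonempty.image _ ⟨f 0, (hf 0).1⟩) ?_
  rintro _ ⟨g, hg, rfl⟩
  rw [mul_assoc, inv_mul_eq_div, le_div_iff₀' hγ0, ← div_le_iff₀' hC]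
  refine le_entropyNumber hbdd fun ε hε c hc => ?_
  rw [div_le_iff₀' hC]
  set s : ℝ := γ * Metric.infDist g (spanFirst f n : Set X)
  have hs0 : 0 ≤ s := mul_nonneg hγ0.le Metric.infDist_nonneg
  rcases hs0.eq_or_lt with h0 | hspos
  · rw [← h0]
    positivity
  have hd : ∀ i : Fin n, s ≤ Metric.infDist (f i) (spanFirst f i : Set X) := fun i =>
    (mul_le_mul_of_nonneg_left (Metric.infDist_le_infDist_of_subset
      (spanFirst_mono f i.2.le) ⟨0, Submodule.zero_mem _⟩) hγ0.le).trans ((hf i).2 g hg)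
  have hpow : s ^ n ≤ B * ε ^ n :=
    pow_le_of_triangular_of_cover hn (v := fun i : Fin n => f i)
      (orthonormal_orthoResidual f fun i => hspos.trans_le (hd i))
      (fun i j hij => inner_orthoResidual_of_mem f (mem_spanFirst f hij)) hs0
      (fun i => (hd i).trans (infDist_le_inner_orthoResidual f i)) hε.le c
      (fun x hx => Set.mem_iUnion.1 (hc (subset_closure
        ⟨n, x, fun i => f i, fun i => (hf i).1, hx, rfl⟩)))
  refine le_of_pow_le_pow_left₀ hn0 (by positivity) ?_
  rwa [mul_pow _ ε, Real.rpow_inv_natCast_pow hBpos.le hn0]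
end

section
/- There exists an absolute constant C > 0 (independent of K and n) such that for every compact subset K of a real Hilbert space X, every γ ∈ (0,1], and every sequence produced by the weak greedy algorithm with parameter γ, the error satisfies σ_n(K) ≤ C γ^{−1} √n · ε_n(co(K)) for all n ≥ 1. -/
open scoped RealInnerProductSpace

/-- The ratio of the volume of the Euclidean unit ball to that of the cross-polytope (without the
factor `2 ^ n`) is at most `(4 √n) ^ n`. -/
theorem factorial_mul_sqrt_pi_pow_le (n : ℕ) :
    (n.factorial : ℝ) * √Real.pi ^ n ≤ (4 * √(n : ℝ)) ^ n * Real.Gamma (n / 2 + 1) := by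
  induction n using Nat.twoStepInduction with
  | zero => simp
  | one =>
    have h : Real.Gamma (((1 : ℕ) : ℝ) / 2 + 1) = 1 / 2 * √Real.pi := by
      rw [Nat.cast_one, Real.Gamma_add_one (by norm_num), Real.Gamma_one_half_eq]
    rw [h]
    simp
    nlinarith [Real.sqrt_nonneg Real.pi]
  | more n ih _ =>
    have hΓ : Real.Gamma (((n + 2 : ℕ) : ℝ) / 2 + 1) =
        ((n : ℝ) / 2 + 1) * Real.Gamma ((n : ℝ) / 2 + 1) := by
      rw [← Real.Gamma_add_one (by positivity)]
      push_cast
      ring_nf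
    have hΓ_pos : 0 < Real.Gamma ((n : ℝ) / 2 + 1) := Real.Gamma_pos_of_pos (by positivity)
    have hmono : (4 * √(n : ℝ)) ^ n ≤ (4 * √((n + 2 : ℕ) : ℝ)) ^ n := by
      gcongr
      simp
    have hcoef : ((n : ℝ) + 1) * Real.pi ≤ 8 * ((n : ℝ) + 2) := by
      nlinarith [Real.pi_lt_four, Real.pi_pos, (Nat.cast_nonneg n : (0 : ℝ) ≤ n)]
    have hsq : (4 * √((n + 2 : ℕ) : ℝ)) ^ 2 = 16 * ((n : ℝ) + 2) := by
      rw [mul_pow, Real.sq_sqrt (by positivity)]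
      push_cast
      ring
    rw [hΓ, pow_add (4 * √((n + 2 : ℕ) : ℝ)), hsq, pow_add, Real.sq_sqrt Real.pi_pos.le,
      Nat.factorial_succ, Nat.factorial_succ]
    push_cast
    calc ((n : ℝ) + 1 + 1) * (((n : ℝ) + 1) * n.factorial) * (√Real.pi ^ n * Real.pi)
        = (n.factorial * √Real.pi ^ n) * (((n : ℝ) + 2) * (((n : ℝ) + 1) * Real.pi)) := by ring
      _ ≤ ((4 * √((n + 2 : ℕ) : ℝ)) ^ n * Real.Gamma ((n : ℝ) / 2 + 1)) *
          (((n : ℝ) + 2) * (8 * ((n : ℝ) + 2))) := by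
        refine mul_le_mul (ih.trans ?_) ?_ (by positivity) (by positivity) <;> gcongr
      _ = _ := by push_cast; ring

/-- If the image of the cross-polytope under a matrix `T` is covered by `2 ^ n` Euclidean balls of
radius `ε`, then `|det T| ≤ (4 √n ε) ^ n`. -/
theorem abs_det_le_of_crossPolytope_subset {n : ℕ} (hn : 1 ≤ n) (T : Matrix (Fin n) (Fin n) ℝ)
    {ε : ℝ} (hε : 0 < ε) (c : Fin (2 ^ n) → Fin n → ℝ)
    (h : ∀ x : Fin n → ℝ, ∑ i, |x i| ≤ 1 →
      ∃ j, ∑ k, ((T.mulVec x) k - c j k) ^ 2 ≤ ε ^ 2) :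
    |T.det| ≤ (4 * √(n : ℝ) * ε) ^ n := by
  have : Nonempty (Fin n) := ⟨⟨0, hn⟩⟩
  have hcross := MeasureTheory.volume_sum_rpow_lt_one (Fin n) (p := 1) le_rfl
  have hball := MeasureTheory.volume_sum_rpow_le (Fin n) (p := 2) one_le_two ε
  have hΓ : 2 * Real.Gamma (1 / 2 + 1) = √Real.pi := by
    rw [Real.Gamma_add_one (by norm_num), Real.Gamma_one_half_eq]
    ring
  have hΓ' : 2 * Real.Gamma (1 / 1 + 1) = 2 := by
    norm_num [Real.Gamma_two]
  rw [hΓ', Fintype.card_fin, div_one, Real.Gamma_nat_eq_factorial] at hcross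
  rw [hΓ, Fintype.card_fin] at hball
  set S : Set (Fin n → ℝ) := {x | ∑ i, |x i| ^ (1 : ℝ) < 1} with hS
  set B : Set (Fin n → ℝ) := {x | (∑ i, |x i| ^ (2 : ℝ)) ^ (1 / (2 : ℝ)) ≤ ε} with hB
  have hcover : Matrix.toLin' T '' S ⊆ ⋃ j, (fun y => y + -c j) ⁻¹' B := by
    rintro _ ⟨x, hx, rfl⟩
    obtain ⟨j, hj⟩ := h x (by
      have hx' : ∑ i, |x i| ^ (1 : ℝ) < 1 := hx
      simpa using hx'.le)
    refine Set.mem_iUnion.2 ⟨j, ?_⟩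
    simp only [hB, Set.mem_preimage, Set.mem_ofPred_eq, ← Real.sqrt_eq_rpow]
    refine Real.sqrt_le_iff.2 ⟨hε.le, ?_⟩
    simpa [← sub_eq_add_neg] using hj
  have hvol := (MeasureTheory.measure_mono (μ := MeasureTheory.volume) hcover).trans
    (MeasureTheory.measure_iUnion_fintype_le _ _)
  simp only [MeasureTheory.measure_preimage_add_right, MeasureTheory.Measure.addHaar_image_linearMap,
    LinearMap.det_toLin', Finset.sum_const, Finset.card_univ, Fintype.card_fin, hcross, hball,
    nsmul_eq_mul] at hvol
  have hΓ_pos : 0 < Real.Gamma ((n : ℝ) / 2 + 1) := Real.Gamma_pos_of_pos (by positivity)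
  rw [← ENNReal.ofReal_pow hε.le, ← ENNReal.ofReal_mul (by positivity),
    ← ENNReal.ofReal_mul (by positivity), ← ENNReal.ofReal_natCast,
    ← ENNReal.ofReal_mul (by positivity), ENNReal.ofReal_le_ofReal_iff (by positivity)] at hvol
  push_cast at hvol
  have hfact : (0 : ℝ) < n.factorial := by positivity
  have hmain : |T.det| * Real.Gamma ((n : ℝ) / 2 + 1) ≤
      ε ^ n * (n.factorial * √Real.pi ^ n) := by
    have e1 : |T.det| * Real.Gamma ((n : ℝ) / 2 + 1) =
        (|T.det| * (2 ^ n / n.factorial)) * (n.factorial * Real.Gamma ((n : ℝ) / 2 + 1) / 2 ^ n) := by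
      field_simp
    have e2 : ε ^ n * (n.factorial * √Real.pi ^ n) =
        (2 ^ n * (ε ^ n * (√Real.pi ^ n / Real.Gamma ((n : ℝ) / 2 + 1)))) *
          (n.factorial * Real.Gamma ((n : ℝ) / 2 + 1) / 2 ^ n) := by
      field_simp
    rw [e1, e2]
    gcongr
  refine le_of_mul_le_mul_right (hmain.trans ?_) hΓ_pos
  calc ε ^ n * (n.factorial * √Real.pi ^ n)
      ≤ ε ^ n * ((4 * √(n : ℝ)) ^ n * Real.Gamma (n / 2 + 1)) :=
        mul_le_mul_of_nonneg_left (factorial_mul_sqrt_pi_pow_le n) (by positivity)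
    _ = _ := by ring

section GramSchmidt

variable {X : Type*} [NormedAddCommGroup X] [InnerProductSpace ℝ X]

theorem infDist_spanFirst_le_norm_gramSchmidt (f : ℕ → X) (k : ℕ) :
    Metric.infDist (f k) (spanFirst f k : Set X) ≤ ‖InnerProductSpace.gramSchmidt ℝ f k‖ := by
  have hmem : f k - InnerProductSpace.gramSchmidt ℝ f k ∈ spanFirst f k := by
    have hspan : spanFirst f k =
        Submodule.span ℝ (InnerProductSpace.gramSchmidt ℝ f '' Set.Iio k) :=
      (InnerProductSpace.span_gramSchmidt_Iio ℝ f k).symm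
    rw [hspan, InnerProductSpace.gramSchmidt_def, sub_sub_cancel]
    refine Submodule.sum_mem _ fun i hi => ?_
    rw [Submodule.starProjection_singleton]
    exact Submodule.smul_mem _ _ (Submodule.subset_span ⟨i, Finset.mem_Iio.1 hi, rfl⟩)
  simpa [dist_eq_norm] using Metric.infDist_le_dist_of_mem (x := f k) hmem

theorem inner_gramSchmidt_self_s2 (f : ℕ → X) (k : ℕ) :
    ⟪InnerProductSpace.gramSchmidt ℝ f k, f k⟫ = ‖InnerProductSpace.gramSchmidt ℝ f k‖ ^ 2 := by
  conv_lhs => rw [InnerProductSpace.gramSchmidt_def'' ℝ f k]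
  rw [inner_add_right, real_inner_self_eq_norm_sq, inner_sum, Finset.sum_eq_zero, add_zero]
  intro i hi
  rw [inner_smul_right, InnerProductSpace.gramSchmidt_orthogonal ℝ f (Finset.mem_Iio.1 hi).ne',
    mul_zero]

/-- If each of the first `n` terms of a sequence in `K` has distance at least `δ` from the span of
the previous ones, then `δ ≤ 4 √n ε` whenever `2 ^ n` balls of radius `ε` cover the symmetric convex
hull of `K`. -/
theorem le_mul_radius_of_symConvexHull_subset {K : Set X} {f : ℕ → X} (hf : ∀ k, f k ∈ K)
    {n : ℕ} (hn : 1 ≤ n) {δ : ℝ} (hδ : 0 < δ)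
    (hdist : ∀ k < n, δ ≤ Metric.infDist (f k) (spanFirst f k : Set X))
    {ε : ℝ} (hε : 0 < ε) (c : Fin (2 ^ n) → X)
    (hc : symConvexHull K ⊆ ⋃ i, Metric.closedBall (c i) ε) :
    δ ≤ 4 * √(n : ℝ) * ε := by
  have hgs : ∀ k : Fin n, δ ≤ ‖InnerProductSpace.gramSchmidt ℝ f k‖ := fun k =>
    (hdist k k.2).trans (infDist_spanFirst_le_norm_gramSchmidt f k)
  set e : Fin n → X := fun k => InnerProductSpace.gramSchmidtNormed ℝ f k
  have he_def : ∀ k : Fin n, e k = ‖InnerProductSpace.gramSchmidt ℝ f k‖⁻¹ •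
      InnerProductSpace.gramSchmidt ℝ f k := fun k => rfl
  have hortho : Orthonormal ℝ e := by
    refine ⟨fun k => ?_, fun i j hij => ?_⟩
    · rw [he_def, norm_smul, norm_inv, norm_norm, inv_mul_cancel₀ (hδ.trans_le (hgs k)).ne']
    · change ⟪e i, e j⟫ = 0
      rw [he_def, he_def, inner_smul_left, inner_smul_right,
        InnerProductSpace.gramSchmidt_orthogonal ℝ f (Fin.val_ne_of_ne hij)]
      simp
  set T : Matrix (Fin n) (Fin n) ℝ := Matrix.of fun k j => ⟪e k, f j⟫ with hT
  have hdet : T.det = ∏ k : Fin n, ‖InnerProductSpace.gramSchmidt ℝ f k‖ := by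
    rw [Matrix.det_of_isUpperTriangular (M := T)]
    · refine Finset.prod_congr rfl fun k _ => ?_
      rw [hT, Matrix.of_apply, he_def, inner_smul_left, inner_gramSchmidt_self_s2]
      have := (hδ.trans_le (hgs k)).ne'
      simp
      field_simp
    · intro k j (hjk : j < k)
      rw [hT, Matrix.of_apply, he_def, inner_smul_left,
        InnerProductSpace.gramSchmidt_inv_triangular ℝ f (Fin.lt_def.1 hjk), mul_zero]
  have hcover := abs_det_le_of_crossPolytope_subset hn T hε (fun j k => ⟪e k, c j⟫) (by
    intro x hx
    have hmem : ∑ i, x i • f i ∈ symConvexHull K :=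
      subset_closure ⟨n, x, fun i => f i, fun i => hf i, hx, rfl⟩
    obtain ⟨j, hj⟩ := Set.mem_iUnion.1 (hc hmem)
    refine ⟨j, ?_⟩
    have hcoord : ∀ k, T.mulVec x k - ⟪e k, c j⟫ = ⟪e k, ∑ i, x i • f i - c j⟫ := by
      intro k
      rw [inner_sub_right, inner_sum]
      simp [Matrix.mulVec, dotProduct, hT, inner_smul_right, mul_comm]
    have hbessel := hortho.sum_inner_products_le (x := ∑ i, x i • f i - c j)
      (s := Finset.univ)
    simp only [Real.norm_eq_abs, sq_abs] at hbessel
    simp only [hcoord]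
    rw [Metric.mem_closedBall, dist_eq_norm] at hj
    exact hbessel.trans (by gcongr))
  have hpow : δ ^ n ≤ (4 * √(n : ℝ) * ε) ^ n := by
    calc δ ^ n = ∏ _k : Fin n, δ := by simp
      _ ≤ ∏ k : Fin n, ‖InnerProductSpace.gramSchmidt ℝ f k‖ :=
        Finset.prod_le_prod (fun _ _ => hδ.le) fun k _ => hgs k
      _ ≤ _ := hdet ▸ (le_abs_self _).trans hcover
  exact le_of_pow_le_pow_left₀ (by omega) (by positivity) hpow

end GramSchmidt

/-- The radii admissible in the definition of the entropy number of the symmetric convex hull of a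
bounded set form a nonempty set. -/
theorem exists_cover_symConvexHull {X : Type*} [NormedAddCommGroup X] [NormedSpace ℝ X]
    {K : Set X} (hK : Bornology.IsBounded K) (n : ℕ) :
    ∃ ε : ℝ, 0 < ε ∧ ∃ c : Fin (2 ^ n) → X,
      symConvexHull K ⊆ ⋃ i, Metric.closedBall (c i) ε := by
  obtain ⟨R, hR, hKR⟩ := hK.exists_pos_norm_le
  refine ⟨R, hR, fun _ => 0, fun x hx => Set.mem_iUnion.2 ⟨⟨0, by positivity⟩, ?_⟩⟩
  refine closure_minimal ?_ Metric.isClosed_closedBall hx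
  rintro _ ⟨m, a, g, hg, ha, rfl⟩
  rw [mem_closedBall_zero_iff]
  calc ‖∑ i, a i • g i‖ ≤ ∑ i, |a i| * R := by
        refine norm_sum_le_of_le _ fun i _ => ?_
        rw [norm_smul, Real.norm_eq_abs]
        gcongr
        exact hKR _ (hg i)
    _ = (∑ i, |a i|) * R := by rw [Finset.sum_mul]
    _ ≤ R := mul_le_of_le_one_left hR.le ha

/-- The weak greedy iterates up to step `n` stay at distance at least `γ σ_n(K)` from the span of
their predecessors. -/
theorem IsWeakGreedy.mul_greedyError_le {X : Type*} [NormedAddCommGroup X] [NormedSpace ℝ X]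
    {γ : ℝ} (hγ : 0 < γ) {K : Set X} {f : ℕ → X} (hf : IsWeakGreedy γ K f) {k n : ℕ}
    (hkn : k ≤ n) :
    γ * greedyError K f n ≤ Metric.infDist (f k) (spanFirst f k : Set X) := by
  rw [mul_comm, ← le_div_iff₀ hγ]
  refine csSup_le ⟨_, f 0, (hf 0).1, rfl⟩ ?_
  rintro _ ⟨g, hg, rfl⟩
  rw [le_div_iff₀ hγ, mul_comm]
  refine le_trans ?_ ((hf k).2 g hg)
  have hsub : spanFirst f k ≤ spanFirst f n :=
    Submodule.span_mono (Set.image_mono fun i (hi : i < k) => hi.trans_le hkn)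
  exact mul_le_mul_of_nonneg_left
    (Metric.infDist_le_infDist_of_subset hsub ⟨0, Submodule.zero_mem _⟩) hγ.le

/-- there is an absolute constant `C` with
`σ_n(K) ≤ C γ⁻¹ √n ε_n(co(K))` for the weak greedy algorithm in any Hilbert space. -/
theorem weakGreedy_error_le_sqrt_entropy_hilbert :
    ∃ C : ℝ, 0 < C ∧
      ∀ (X : Type) (_ : NormedAddCommGroup X) (_ : InnerProductSpace ℝ X) (_ : CompleteSpace X)
        (K : Set X), IsCompact K →
        ∀ γ : ℝ, γ ∈ Set.Ioc (0 : ℝ) 1 →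
        ∀ f : ℕ → X, IsWeakGreedy γ K f →
        ∀ n : ℕ, 1 ≤ n →
          greedyError K f n
            ≤ C * γ⁻¹ * Real.sqrt n * entropyNumber n (symConvexHull K) := by
  refine ⟨4, by norm_num, ?_⟩
  intro X _ _ _ K hK γ hγ f hf n hn
  have hγ0 : 0 < γ := hγ.1
  have hentropy : γ * greedyError K f n / (4 * √(n : ℝ)) ≤
      entropyNumber n (symConvexHull K) := by
    refine le_csInf (exists_cover_symConvexHull hK.isBounded n) ?_
    rintro ε ⟨hε, c, hc⟩
    rw [div_le_iff₀' (by positivity)]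
    rcases le_or_gt (γ * greedyError K f n) 0 with hδ | hδ
    · exact hδ.trans (by positivity)
    · exact le_mul_radius_of_symConvexHull_subset (fun k => (hf k).1) hn hδ
        (fun k hk => hf.mul_greedyError_le hγ0 hk.le) hε c hc
  rw [div_le_iff₀' (by positivity)] at hentropy
  calc greedyError K f n = γ⁻¹ * (γ * greedyError K f n) := by field_simp
    _ ≤ γ⁻¹ * (4 * √(n : ℝ) * entropyNumber n (symConvexHull K)) := by gcongr
    _ = _ := by ring
end
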